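/- arXiv:2503.20657 — 2 statements merged into one kernel-verified Lean document; each statement's English description precedes it below -/
import Mathlib

section
/- Let n ≥ 1 and m ≥ 2 be integers and let ξ₁, …, ξ_m be points of the open unit ball 𝔹_n = {z ∈ ℂⁿ : |z| < 1}, with indices taken modulo m (ξ_{m+1} := ξ₁). Then ∏_{j=1}^{m} |1 − ⟨ξ_j, ξ_{j+1}⟩| / (1 − |ξ_j|²) ≥ 1, and equality holds if and only if ξ₁ = ξ₂ = ⋯ = ξ_m. (Equivalently, the imaginary part of the phase function Φ(ξ₁,…,ξ_m) = i Log ∏_{j=1}^m (1 − ⟨ξ_j,ξ_{j+1}⟩)/(1 − |ξ_j|²) is nonnegative, vanishing exactly on the diagonal.) -/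
open scoped ComplexOrder

/-!
Since `2 (1 - re ⟪w, z⟫) = (1 - ‖z‖²) + (1 - ‖w‖²) + ‖z - w‖²`, the arithmetic-geometric mean
inequality gives `(1 - ‖z‖²) (1 - ‖w‖²) ≤ |1 - ⟪w, z⟫|²` on the closed unit ball, with room
`‖z - w‖⁴ / 4` to spare. Multiply this over all pairs `(ξ j, ξ (σ j))`, where `σ` permutes the
indices: each factor `1 - ‖ξ j‖²` occurs twice on the left, so the result is the square of the
desired inequality. As the factors are positive, equality of the products forces equality in every
two-point estimate, that is, `ξ (σ j) = ξ j`.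
-/

section Products

variable {ι : Type*}

lemma prod_mul_comp_perm_eq_sq [Fintype ι] {M : Type*} [CommMonoid M] (σ : Equiv.Perm ι)
    (f : ι → M) : ∏ j, f j * f (σ j) = (∏ j, f j) ^ 2 := by
  rw [Finset.prod_mul_distrib, Equiv.prod_comp σ f, sq]

lemma prod_eq_prod_iff_of_pos_of_le {R : Type*} [CommMonoidWithZero R] [PartialOrder R]
    [ZeroLEOneClass R] [PosMulStrictMono R] [Nontrivial R] {s : Finset ι} {f g : ι → R}
    (hf : ∀ j ∈ s, 0 < f j) (hfg : ∀ j ∈ s, f j ≤ g j) :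
    ∏ j ∈ s, f j = ∏ j ∈ s, g j ↔ ∀ j ∈ s, f j = g j := by
  refine ⟨fun h => ?_, Finset.prod_congr rfl⟩
  by_contra! hne
  obtain ⟨j, hj, hne⟩ := hne
  exact (Finset.prod_lt_prod hf hfg ⟨j, hj, (hfg j hj).lt_of_ne hne⟩).ne h

end Products

section PeriodicFin

open Fin.CommRing

lemma fin_periodic_one_iff_forall_eq {m : ℕ} [NeZero m] {α : Type*} {f : Fin m → α} :
    Function.Periodic f 1 ↔ ∀ j k, f j = f k := by
  refine ⟨fun h => ?_, fun h j => h (j + 1) j⟩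
  have eq_zero (j : Fin m) : f j = f 0 := by
    simpa only [nsmul_one, Fin.cast_val_eq_self] using h.nsmul_eq j.val
  exact fun j k => (eq_zero j).trans (eq_zero k).symm

end PeriodicFin

section TwoPoints

variable {𝕜 E : Type*} [RCLike 𝕜]

section Seminormed

variable [SeminormedAddCommGroup E] [InnerProductSpace 𝕜 E]

lemma one_sub_norm_sq_add_add_norm_sub_sq_le (z w : E) :
    (1 - ‖z‖ ^ 2) + (1 - ‖w‖ ^ 2) + ‖z - w‖ ^ 2 ≤ 2 * ‖1 - inner 𝕜 w z‖ :=
  calc (1 - ‖z‖ ^ 2) + (1 - ‖w‖ ^ 2) + ‖z - w‖ ^ 2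
    _ = 2 * RCLike.re (1 - inner 𝕜 w z) := by
      rw [map_sub, RCLike.one_re, norm_sub_rev, norm_sub_sq (𝕜 := 𝕜)]
      ring
    _ ≤ 2 * ‖1 - inner 𝕜 w z‖ := by
      gcongr
      exact RCLike.re_le_norm _

lemma four_mul_one_sub_norm_sq_mul_add_norm_sub_pow_four_le {z w : E}
    (hz : ‖z‖ ≤ 1) (hw : ‖w‖ ≤ 1) :
    4 * ((1 - ‖z‖ ^ 2) * (1 - ‖w‖ ^ 2)) + ‖z - w‖ ^ 4 ≤ 4 * ‖1 - inner 𝕜 w z‖ ^ 2 := by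
  have hp : 0 ≤ 1 - ‖z‖ ^ 2 := sub_nonneg.2 (pow_le_one₀ (norm_nonneg z) hz)
  have hq : 0 ≤ 1 - ‖w‖ ^ 2 := sub_nonneg.2 (pow_le_one₀ (norm_nonneg w) hw)
  calc 4 * ((1 - ‖z‖ ^ 2) * (1 - ‖w‖ ^ 2)) + ‖z - w‖ ^ 4
    _ ≤ ((1 - ‖z‖ ^ 2) + (1 - ‖w‖ ^ 2)) ^ 2 + (‖z - w‖ ^ 2) ^ 2 := by
      linarith [four_mul_le_sq_add (1 - ‖z‖ ^ 2) (1 - ‖w‖ ^ 2)]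
    _ ≤ ((1 - ‖z‖ ^ 2) + (1 - ‖w‖ ^ 2) + ‖z - w‖ ^ 2) ^ 2 :=
      pow_add_pow_le (add_nonneg hp hq) (by positivity) two_ne_zero
    _ ≤ (2 * ‖1 - inner 𝕜 w z‖) ^ 2 := by
      gcongr
      exact one_sub_norm_sq_add_add_norm_sub_sq_le z w
    _ = 4 * ‖1 - inner 𝕜 w z‖ ^ 2 := by ring

lemma one_sub_norm_sq_mul_le_norm_one_sub_inner_sq {z w : E} (hz : ‖z‖ ≤ 1) (hw : ‖w‖ ≤ 1) :
    (1 - ‖z‖ ^ 2) * (1 - ‖w‖ ^ 2) ≤ ‖1 - inner 𝕜 w z‖ ^ 2 := by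
  have hnonneg : 0 ≤ ‖z - w‖ ^ 4 := by positivity
  linarith [four_mul_one_sub_norm_sq_mul_add_norm_sub_pow_four_le (𝕜 := 𝕜) hz hw]

lemma norm_one_sub_inner_self_sq (z : E) :
    ‖1 - inner 𝕜 z z‖ ^ 2 = (1 - ‖z‖ ^ 2) * (1 - ‖z‖ ^ 2) := by
  have h : 1 - inner 𝕜 z z = ((1 - ‖z‖ ^ 2 : ℝ) : 𝕜) := by
    rw [inner_self_eq_norm_sq_to_K]
    push_cast
    rfl
  rw [h, RCLike.norm_ofReal, sq_abs, sq]

end Seminormed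

lemma one_sub_norm_sq_mul_eq_norm_one_sub_inner_sq_iff [NormedAddCommGroup E]
    [InnerProductSpace 𝕜 E] {z w : E} (hz : ‖z‖ ≤ 1) (hw : ‖w‖ ≤ 1) :
    (1 - ‖z‖ ^ 2) * (1 - ‖w‖ ^ 2) = ‖1 - inner 𝕜 w z‖ ^ 2 ↔ w = z := by
  refine ⟨fun h => ?_, fun h => by rw [h, norm_one_sub_inner_self_sq]⟩
  have hle : ‖z - w‖ ^ 4 ≤ 0 := by
    linarith [four_mul_one_sub_norm_sq_mul_add_norm_sub_pow_four_le (𝕜 := 𝕜) hz hw]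
  have hzero : ‖z - w‖ = 0 := eq_zero_of_pow_eq_zero (hle.antisymm (by positivity))
  exact (sub_eq_zero.1 (norm_eq_zero.1 hzero)).symm

end TwoPoints

theorem phase_product_ge_one_general {𝕜 E ι : Type*} [RCLike 𝕜] [NormedAddCommGroup E]
    [InnerProductSpace 𝕜 E] [Fintype ι] (σ : Equiv.Perm ι) (ξ : ι → E) (hξ : ∀ j, ‖ξ j‖ < 1) :
    1 ≤ ∏ j, ‖1 - inner 𝕜 (ξ (σ j)) (ξ j)‖ / (1 - ‖ξ j‖ ^ 2) ∧
    ((∏ j, ‖1 - inner 𝕜 (ξ (σ j)) (ξ j)‖ / (1 - ‖ξ j‖ ^ 2)) = 1 ↔ ∀ j, ξ (σ j) = ξ j) := by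
  have hpos (j : ι) : 0 < 1 - ‖ξ j‖ ^ 2 :=
    sub_pos.2 (pow_lt_one₀ (norm_nonneg _) (hξ j) two_ne_zero)
  have hprod : 0 < ∏ j, (1 - ‖ξ j‖ ^ 2) := Finset.prod_pos fun j _ => hpos j
  have hnum : 0 ≤ ∏ j, ‖1 - inner 𝕜 (ξ (σ j)) (ξ j)‖ := by positivity
  have hmul_pos (j : ι) : 0 < (1 - ‖ξ j‖ ^ 2) * (1 - ‖ξ (σ j)‖ ^ 2) := mul_pos (hpos _) (hpos _)
  have hle (j : ι) :
      (1 - ‖ξ j‖ ^ 2) * (1 - ‖ξ (σ j)‖ ^ 2) ≤ ‖1 - inner 𝕜 (ξ (σ j)) (ξ j)‖ ^ 2 :=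
    one_sub_norm_sq_mul_le_norm_one_sub_inner_sq (hξ j).le (hξ (σ j)).le
  rw [Finset.prod_div_distrib, one_le_div hprod, div_eq_one_iff_eq hprod.ne',
    eq_comm (b := ∏ j, (1 - ‖ξ j‖ ^ 2)), ← sq_le_sq₀ hprod.le hnum, ← sq_eq_sq₀ hprod.le hnum,
    ← prod_mul_comp_perm_eq_sq σ fun j => 1 - ‖ξ j‖ ^ 2, ← Finset.prod_pow,
    prod_eq_prod_iff_of_pos_of_le (fun j _ => hmul_pos j) fun j _ => hle j]
  simp only [Finset.mem_univ, forall_const]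
  exact ⟨Finset.prod_le_prod (fun j _ => (hmul_pos j).le) fun j _ => hle j,
    forall_congr' fun j =>
      one_sub_norm_sq_mul_eq_norm_one_sub_inner_sq_iff (hξ j).le (hξ (σ j)).le⟩

/-- **Lemma 3.2 (positivity of the imaginary part of the phase).** For points
`ξ₁, …, ξ_m` of the open unit ball of `ℂⁿ` (indices mod `m`),
`∏_j |1 − ⟨ξ_j, ξ_{j+1}⟩| / (1 − |ξ_j|²) ≥ 1`, with equality iff
`ξ₁ = ⋯ = ξ_m`.  Here `⟨z, w⟩ = Σ z_ℓ conj(w_ℓ)`, which in Mathlib's convention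
(conjugate-linear in the first slot) is `inner w z`. -/
theorem phase_product_ge_one (n m : ℕ) (hn : 1 ≤ n) (hm : 2 ≤ m) [NeZero m]
    (ξ : Fin m → EuclideanSpace ℂ (Fin n)) (hξ : ∀ j, ‖ξ j‖ < 1) :
    1 ≤ ∏ j : Fin m,
        ‖1 - (inner ℂ (ξ (j + 1)) (ξ j) : ℂ)‖ / (1 - ‖ξ j‖ ^ 2) ∧
    ((∏ j : Fin m,
        ‖1 - (inner ℂ (ξ (j + 1)) (ξ j) : ℂ)‖ / (1 - ‖ξ j‖ ^ 2)) = 1 ↔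
      ∀ j k : Fin m, ξ j = ξ k) := by
  rw [← fin_periodic_one_iff_forall_eq]
  exact phase_product_ge_one_general (Equiv.addRight 1) ξ hξ
end

section
/- Let m ≥ 2, d ≥ 1 be integers and W a d×d complex matrix satisfying W³ = −W, and let k be the rank of W. Let 𝒪_{m−1} be the (m−1)d × (m−1)d complex matrix which, as an (m−1)×(m−1) block matrix with d×d blocks, has diagonal blocks 2I, blocks −I − iW directly above the diagonal, blocks −I + iW directly below the diagonal, and zero blocks elsewhere. Then det 𝒪_{m−1} = 2^{k(m−1)} · m^{d−k}. In particular, if W = 0 (the isotropic case) then det 𝒪_{m−1} = m^d, and if W has rank 2(d−n) (the co-isotropic case, dim Γ = d in 𝔹_n) then det 𝒪_{m−1} = 2^{2(d−n)(m−1)} m^{2n−d}. -/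
open Complex

/-- The `(m−1)d × (m−1)d` block-tridiagonal matrix `𝒪_{m−1}` with diagonal
blocks `2I`, blocks `−I − iW` directly above the diagonal and `−I + iW`
directly below the diagonal. -/
noncomputable def calO (m d : ℕ) (W : Matrix (Fin d) (Fin d) ℂ) :
    Matrix (Fin (m - 1) × Fin d) (Fin (m - 1) × Fin d) ℂ :=
  fun p q =>
    if p.1 = q.1 then (if p.2 = q.2 then 2 else 0)
    else if (p.1 : ℕ) + 1 = (q.1 : ℕ) then
      -(if p.2 = q.2 then 1 else 0) - Complex.I * W p.2 q.2
    else if (q.1 : ℕ) + 1 = (p.1 : ℕ) then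
      -(if p.2 = q.2 then 1 else 0) + Complex.I * W p.2 q.2
    else 0

/-!
Put `X = iW`, so that `X³ = X`. All blocks of `𝒪_{m−1}` are polynomials in `X`, so they commute and
`det 𝒪_{m−1} = det D`, where `D` is the determinant of the matrix of blocks, computed in the
commutative ring generated by `X` (Silvester). Expanding this tridiagonal determinant gives
`D_{n+2} = 2 D_{n+1} − (1 − X²) D_n`, whose solution is `D_n = (n + 1)(1 − X²) + 2ⁿ X²`. As `X²` is
idempotent of rank `k = rank W`, the matrix `D_{m−1}` acts as `2^{m−1}` on a space of dimension `k`
and as `m` on a complement.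
-/

section Tridiagonal

variable {R S : Type*}

/-- The `n × n` tridiagonal Toeplitz matrix with constant diagonal `a`, superdiagonal `b` and
subdiagonal `c`. The entries may themselves be matrices, which gives block tridiagonal matrices. -/
def tridiagonalToeplitz [Zero R] (n : ℕ) (a b c : R) : Matrix (Fin n) (Fin n) R :=
  Matrix.of fun p q =>
    if p = q then a
    else if (p : ℕ) + 1 = q then b
    else if (q : ℕ) + 1 = p then c
    else 0

theorem tridiagonalToeplitz_map [Zero R] [Zero S] {F : Type*} [FunLike F R S] [ZeroHomClass F R S]
    (f : F) (n : ℕ) (a b c : R) :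
    (tridiagonalToeplitz n a b c).map f = tridiagonalToeplitz n (f a) (f b) (f c) := by
  ext p q
  simp only [tridiagonalToeplitz, Matrix.map_apply, Matrix.of_apply, apply_ite f, map_zero]

theorem tridiagonalToeplitz_submatrix_succ [Zero R] (n : ℕ) (a b c : R) :
    (tridiagonalToeplitz (n + 1) a b c).submatrix Fin.succ Fin.succ =
      tridiagonalToeplitz n a b c := by
  ext p q
  simp [tridiagonalToeplitz]

theorem det_tridiagonalToeplitz_add_two [CommRing R] (n : ℕ) (a b c : R) :
    (tridiagonalToeplitz (n + 2) a b c).det =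
      a * (tridiagonalToeplitz (n + 1) a b c).det - b * c * (tridiagonalToeplitz n a b c).det := by
  set T := tridiagonalToeplitz (n + 2) a b c with hT
  have diagonal : T 0 0 = a := by simp [hT, tridiagonalToeplitz]
  have above_diagonal : T 0 1 = b := by simp [hT, tridiagonalToeplitz]
  have below_diagonal : T 1 0 = c := by simp [hT, tridiagonalToeplitz]
  have first_row (j : Fin n) : T 0 j.succ.succ = 0 := by
    simp [hT, tridiagonalToeplitz, Fin.ext_iff]
  have first_column (i : Fin n) : T i.succ.succ 0 = 0 := by
    simp [hT, tridiagonalToeplitz, Fin.ext_iff]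
  have corner_minor : T.submatrix Fin.succ Fin.succ = tridiagonalToeplitz (n + 1) a b c :=
    tridiagonalToeplitz_submatrix_succ (n + 1) a b c
  have inner_minor : (T.submatrix Fin.succ (Fin.succAbove 1)).submatrix Fin.succ Fin.succ =
      tridiagonalToeplitz n a b c := by
    rw [← tridiagonalToeplitz_submatrix_succ n, ← corner_minor]
    ext i j
    simp
  have off_minor : (T.submatrix Fin.succ (Fin.succAbove 1)).det =
      c * (tridiagonalToeplitz n a b c).det := by
    rw [Matrix.det_succ_column_zero, Fin.sum_univ_succ]
    simp [first_column, inner_minor, below_diagonal]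
  calc
    T.det = T 0 0 * (T.submatrix Fin.succ Fin.succ).det -
        T 0 1 * (T.submatrix Fin.succ (Fin.succAbove 1)).det := by
      rw [Matrix.det_succ_row_zero, Fin.sum_univ_succ, Fin.sum_univ_succ]
      simp [first_row, sub_eq_add_neg]
    _ = _ := by rw [diagonal, above_diagonal, corner_minor, off_minor, mul_assoc]

theorem det_tridiagonalToeplitz_of_pow_three_eq_self [CommRing R] {x : R} (hx : x ^ 3 = x) (n : ℕ) :
    (tridiagonalToeplitz n 2 (-1 - x) (-1 + x)).det = (n + 1) * (1 - x ^ 2) + 2 ^ n * x ^ 2 := by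
  induction n using Nat.twoStepInduction with
  | zero => simp
  | one =>
    suffices (2 : R) = (1 + 1) * (1 - x ^ 2) + 2 * x ^ 2 by simpa [tridiagonalToeplitz]
    ring
  | more n ih₀ ih₁ =>
    rw [det_tridiagonalToeplitz_add_two, ih₀, ih₁]
    push_cast
    linear_combination (2 ^ n - n - 1) * x * hx

end Tridiagonal

open scoped IsMulCommutative in
theorem det_comp_tridiagonalToeplitz_of_pow_three_eq_self {R n : Type*} [CommRing R] [Fintype n]
    [DecidableEq n] {X : Matrix n n R} (hX : X ^ 3 = X) (N : ℕ) :
    (Matrix.comp _ _ _ _ R (tridiagonalToeplitz N 2 (-1 - X) (-1 + X))).det =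
      (((N : R) + 1) • (1 - X ^ 2) + (2 : R) ^ N • X ^ 2).det := by
  let x : Algebra.adjoin R {X} := ⟨X, Algebra.self_mem_adjoin_singleton R X⟩
  let f : Algebra.adjoin R {X} →+* Matrix n n R := (Algebra.adjoin R {X}).val
  have hx : x ^ 3 = x := Subtype.ext hX
  have hfx : f x = X := rfl
  have hf_two : f 2 = 2 := map_ofNat f 2
  have hblocks : (tridiagonalToeplitz N 2 (-1 - x) (-1 + x)).map f =
      tridiagonalToeplitz N 2 (-1 - X) (-1 + X) := by
    simp [tridiagonalToeplitz_map, hfx, hf_two]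
  rw [← hblocks, ← Matrix.det_det, det_tridiagonalToeplitz_of_pow_three_eq_self hx]
  simp [hfx, hf_two, Algebra.smul_def, map_ofNat (algebraMap R (Matrix n n R)) 2]

section Idempotent

variable {K : Type*} [Field K]

theorem linearMap_det_smul_one_sub_add_smul_of_isIdempotentElem {V : Type*} [AddCommGroup V]
    [Module K V] [FiniteDimensional K V] {p : Module.End K V} (hp : IsIdempotentElem p) (a b : K) :
    LinearMap.det (a • (1 - p) + b • p) =
      b ^ Module.finrank K p.range * a ^ (Module.finrank K V - Module.finrank K p.range) := by
  set e := a • (1 - p) + b • p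
  have he_apply (v : V) : e v = a • (v - p v) + b • p v := rfl
  have he_mem {v : V} (hv : v ∈ p.range) : e v = b • v := by
    rw [he_apply, (LinearMap.IsIdempotentElem.mem_range_iff hp).1 hv, sub_self, smul_zero, zero_add]
  have hinv : ∀ v ∈ p.range, e v ∈ p.range := fun v hv => by
    rw [he_mem hv]
    exact p.range.smul_mem b hv
  have hrestrict : e.restrict hinv = b • LinearMap.id := by
    ext v
    exact he_mem v.2
  have hquotient : p.range.mapQ p.range e hinv = a • LinearMap.id := by
    ext v
    have : e v - a • v ∈ p.range := ⟨(b - a) • v, by rw [he_apply, map_smul]; module⟩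
    exact (Submodule.Quotient.eq _).2 this
  rw [e.det_eq_det_mul_det _ hinv, hrestrict, hquotient, LinearMap.det_smul, LinearMap.det_smul,
    LinearMap.det_id, LinearMap.det_id, mul_one, mul_one, Submodule.finrank_quotient]

theorem matrix_det_smul_one_sub_add_smul_of_isIdempotentElem {n : Type*} [Fintype n]
    [DecidableEq n] {P : Matrix n n K} (hP : IsIdempotentElem P) (a b : K) :
    (a • (1 - P) + b • P).det = b ^ P.rank * a ^ (Fintype.card n - P.rank) :=
  calc
    (a • (1 - P) + b • P).det = LinearMap.det (Matrix.toLinAlgEquiv' (a • (1 - P) + b • P)) :=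
      (LinearMap.det_toLin' _).symm
    _ = LinearMap.det (a • (1 - Matrix.toLinAlgEquiv' P) + b • Matrix.toLinAlgEquiv' P) := by
      simp only [map_add, map_sub, map_smul, map_one]
    _ = b ^ P.rank * a ^ (Fintype.card n - P.rank) := by
      rw [linearMap_det_smul_one_sub_add_smul_of_isIdempotentElem (hP.map Matrix.toLinAlgEquiv'),
        Module.finrank_fintype_fun_eq_card]
      rfl

end Idempotent

theorem rank_sq_of_pow_three_eq_self {R n : Type*} [CommSemiring R] [StrongRankCondition R]
    [Fintype n] [DecidableEq n] {X : Matrix n n R} (hX : X ^ 3 = X) : (X ^ 2).rank = X.rank := by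
  refine le_antisymm ?_ ?_
  · rw [sq]
    exact Matrix.rank_mul_le_left X X
  · conv_lhs => rw [← hX, pow_succ]
    exact Matrix.rank_mul_le_left (X ^ 2) X

theorem det_calO_explicit_general {K n : Type*} [Field K] [Fintype n] [DecidableEq n]
    {X : Matrix n n K} (hX : X ^ 3 = X) (N : ℕ) :
    (Matrix.comp _ _ _ _ K (tridiagonalToeplitz N 2 (-1 - X) (-1 + X))).det =
      2 ^ (X.rank * N) * ((N : K) + 1) ^ (Fintype.card n - X.rank) := by
  have hidem : IsIdempotentElem (X ^ 2) := by
    rw [IsIdempotentElem, ← pow_add, pow_succ, hX, ← sq]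
  rw [det_comp_tridiagonalToeplitz_of_pow_three_eq_self hX,
    matrix_det_smul_one_sub_add_smul_of_isIdempotentElem hidem, rank_sq_of_pow_three_eq_self hX,
    ← pow_mul, mul_comm N]

theorem calO_eq_comp_tridiagonalToeplitz (m d : ℕ) (W : Matrix (Fin d) (Fin d) ℂ) :
    calO m d W =
      Matrix.comp _ _ _ _ ℂ (tridiagonalToeplitz (m - 1) 2 (-1 - I • W) (-1 + I • W)) := by
  ext ⟨p, r⟩ ⟨q, s⟩
  simp only [calO, tridiagonalToeplitz, Matrix.comp_apply, Matrix.of_apply]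
  split_ifs <;> simp_all [Matrix.ofNat_apply]

/-- **Proposition B.10 (determinant of `𝒪_{m−1}`, explicit form).** If
`W³ = −W` and `k = rank W`, then `det 𝒪_{m−1} = 2^{k(m−1)} m^{d−k}`.
(For `W = 0`, the isotropic case, this is `m^d`; for `rank W = 2(d−n)`, the
co-isotropic case, it is `2^{2(d−n)(m−1)} m^{2n−d}`.) -/
theorem det_calO_explicit (m d : ℕ) (hm : 2 ≤ m) (hd : 1 ≤ d)
    (W : Matrix (Fin d) (Fin d) ℂ) (hW : W ^ 3 = -W) :
    (calO m d W).det = 2 ^ (W.rank * (m - 1)) * (m : ℂ) ^ (d - W.rank) := by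
  have hX : (I • W) ^ 3 = I • W := by rw [smul_pow, hW, I_pow_three, smul_neg, neg_smul, neg_neg]
  have hrank : (I • W).rank = W.rank :=
    W.rank_smul_of_mem_nonZeroDivisors (mem_nonZeroDivisors_of_ne_zero I_ne_zero)
  rw [calO_eq_comp_tridiagonalToeplitz, det_calO_explicit_general hX, hrank, Fintype.card_fin,
    ← Nat.cast_add_one, Nat.sub_add_cancel (by omega)]
end
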